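/- (Equivalence theorem.) Under the Setup together with the equation-of-state/Euler hypotheses, suppose additionally: Π is C³ and K is C² on O; (C): (∂₁Π)² + (∂₃Π)² ≠ 0 everywhere on O; and O = O₁ ∪ O₂ where O₁, O₂ are open, Ω is constant on O₁, and u ≤ 0 (hence ρ = P = 0) on O₂. Then the Einstein system (36a), (36b), (36c), (36d), (36e), (36f) holds on O if and only if the reduced equations (N.9a), (N.9b), (N.9c), (Ya), (Yb) hold on O. -/

import Mathlib

open Real

/-- Partial derivative in the first coordinate `ϖ`. -/
noncomputable def d1 (f : ℝ × ℝ → ℝ) : ℝ × ℝ → ℝ := fun p => fderiv ℝ f p (1, 0)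

/-- Partial derivative in the second coordinate `z`. -/
noncomputable def d3 (f : ℝ × ℝ → ℝ) : ℝ × ℝ → ℝ := fun p => fderiv ℝ f p (0, 1)

/-!
Plane vectors are encoded as complex numbers, so that the trace-free symmetric `2 × 2` matrices
become complex-valued functions and their divergence becomes the Wirtinger operator `∂₁ - i ∂₃`.

The components `R₀₀`, `R₀₂`, `R₂₂` depend on the left-hand sides of (N.9a), (N.9b), (N.9c) through
an invertible triangular system, and their sources match accordingly. In the `(ϖ, z)`-block, the
trace-free part `R₁₁ - R₃₃ + 2i R₁₃` is a multiple of the residual of (Ya) plus `i` times that of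
(Yb), while the trace gives a second-order equation for `K`. The Einstein system is thus the reduced
system together with this last equation, which is redundant: the contracted Bianchi identity
expresses `(∂₁ - i ∂₃)` of the residual through the second-order equations, and the Euler equation
is the corresponding identity for the sources. Where (Ya) and (Yb) hold, the two identities differ
by the equation for `K` times `∇Π`, and `∇Π ≠ 0`.

At the surface of the fluid the Euler equation holds because the pressure, as a function of `u`, is
differentiable with derivative `0` at `0`.
-/

open Topology Filter ComplexConjugate RealInnerProductSpace

theorem hasDerivAt_of_eq_zero_of_nonpos {φ φ' : ℝ → ℝ} (hφ : ContinuousAt φ 0)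
    (hφ' : ContinuousAt φ' 0) (hφ₀ : ∀ t ≤ 0, φ t = 0) (hφ'₀ : ∀ t ≤ 0, φ' t = 0)
    (h : ∀ t > 0, HasDerivAt φ (φ' t) t) (t : ℝ) : HasDerivAt φ (φ' t) t := by
  refine hasDerivAt_of_hasDerivAt_of_ne' (fun t ht => ?_) hφ hφ' t
  obtain ht | ht := ht.lt_or_gt
  · rw [hφ'₀ t ht.le]
    exact (hasDerivAt_const t 0).congr_of_eventuallyEq
      ((eventually_le_nhds ht).mono hφ₀)
  · exact h t ht

section PlaneCalculus

/-- The gradient `∂₁f + i ∂₃f` of a real function on the `(ϖ, z)`-plane. The complex encoding turns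
`v ↦ v²` into the trace-free part of `v ⊗ v`, up to a factor `2`. -/
noncomputable def grad (f : ℝ × ℝ → ℝ) (p : ℝ × ℝ) : ℂ := ⟨d1 f p, d3 f p⟩

/-- The flat Laplacian `∂₁² + ∂₃²`. -/
noncomputable def lap (f : ℝ × ℝ → ℝ) (p : ℝ × ℝ) : ℝ := d1 (d1 f) p + d3 (d3 f) p

/-- The Wirtinger operator `∂₁ - i ∂₃`. On a field `a + i b` encoding the trace-free symmetric
matrices `!![a, b; b, -a]`, it is the row-wise divergence. -/
noncomputable def wirtinger (V : ℝ × ℝ → ℂ) (p : ℝ × ℝ) : ℂ :=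
  fderiv ℝ V p (1, 0) - Complex.I * fderiv ℝ V p (0, 1)

/-- The conjugate Wirtinger operator `∂₁ + i ∂₃`. -/
noncomputable def wirtingerConj (V : ℝ × ℝ → ℂ) (p : ℝ × ℝ) : ℂ :=
  fderiv ℝ V p (1, 0) + Complex.I * fderiv ℝ V p (0, 1)

variable {f g : ℝ × ℝ → ℝ} {V W : ℝ × ℝ → ℂ} {p : ℝ × ℝ}

theorem inner_grad_grad : ⟪grad f p, grad g p⟫ = d1 f p * d1 g p + d3 f p * d3 g p := by
  simp [Complex.inner, grad, mul_comm]

theorem ofReal_inner_eq (v w : ℂ) : (⟪v, w⟫ : ℂ) = (conj v * w + v * conj w) / 2 := by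
  rw [Complex.inner, Complex.re_eq_add_conj, map_mul, Complex.conj_conj]
  ring

theorem grad_congr (h : f =ᶠ[𝓝 p] g) : grad f p = grad g p := by
  simp only [grad, d1, d3, h.fderiv_eq]

theorem wirtinger_congr (h : V =ᶠ[𝓝 p] W) : wirtinger V p = wirtinger W p := by
  simp only [wirtinger, h.fderiv_eq]

theorem wirtingerConj_congr (h : V =ᶠ[𝓝 p] W) : wirtingerConj V p = wirtingerConj W p := by
  simp only [wirtingerConj, h.fderiv_eq]

theorem grad_add (hf : DifferentiableAt ℝ f p) (hg : DifferentiableAt ℝ g p) :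
    grad (fun q => f q + g q) p = grad f p + grad g p := by
  apply Complex.ext <;> simp [grad, d1, d3, fderiv_fun_add hf hg]

theorem grad_mul (hf : DifferentiableAt ℝ f p) (hg : DifferentiableAt ℝ g p) :
    grad (fun q => f q * g q) p = f p • grad g p + g p • grad f p := by
  apply Complex.ext <;> simp [grad, d1, d3, fderiv_fun_mul hf hg]

theorem grad_comp {φ : ℝ → ℝ} {φ' : ℝ} (hφ : HasDerivAt φ φ' (f p))
    (hf : DifferentiableAt ℝ f p) : grad (fun q => φ (f q)) p = φ' • grad f p := by
  have h : HasFDerivAt (fun q => φ (f q)) (φ' • fderiv ℝ f p) p :=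
    hφ.comp_hasFDerivAt p hf.hasFDerivAt
  apply Complex.ext <;> simp [grad, d1, d3, h.fderiv]

theorem grad_div (hf : DifferentiableAt ℝ f p) (hg : DifferentiableAt ℝ g p) (hg₀ : g p ≠ 0) :
    grad (fun q => f q / g q) p = (g p)⁻¹ • grad f p - (f p / g p ^ 2) • grad g p := by
  simp only [div_eq_mul_inv]
  rw [grad_mul hf (hg.fun_inv hg₀), grad_comp (hasDerivAt_inv hg₀) hg]
  module

theorem wirtinger_add (hV : DifferentiableAt ℝ V p) (hW : DifferentiableAt ℝ W p) :
    wirtinger (fun q => V q + W q) p = wirtinger V p + wirtinger W p := by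
  simp only [wirtinger, fderiv_fun_add hV hW, add_apply]
  ring

theorem wirtinger_sub (hV : DifferentiableAt ℝ V p) (hW : DifferentiableAt ℝ W p) :
    wirtinger (fun q => V q - W q) p = wirtinger V p - wirtinger W p := by
  simp only [wirtinger, fderiv_fun_sub hV hW, sub_apply]
  ring

theorem wirtinger_const_smul (r : ℝ) : wirtinger (fun q => r • V q) p = r • wirtinger V p := by
  have h (v : ℝ × ℝ) : fderiv ℝ (fun q => r • V q) p v = r • fderiv ℝ V p v :=
    congr($(fderiv_const_smul_field (𝕜 := ℝ) (f := V) r) p v)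
  rw [wirtinger, wirtinger, h, h, smul_sub, mul_smul_comm]

theorem wirtinger_mul (hV : DifferentiableAt ℝ V p) (hW : DifferentiableAt ℝ W p) :
    wirtinger (fun q => V q * W q) p = V p * wirtinger W p + W p * wirtinger V p := by
  simp only [wirtinger, fderiv_fun_mul hV hW, add_apply, smul_apply, smul_eq_mul]
  ring

theorem wirtinger_sq (hV : DifferentiableAt ℝ V p) :
    wirtinger (fun q => V q ^ 2) p = 2 * V p * wirtinger V p := by
  simp only [pow_two, wirtinger_mul hV hV]
  ring

theorem hasFDerivAt_ofReal_comp (hf : DifferentiableAt ℝ f p) :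
    HasFDerivAt (fun q => (f q : ℂ)) (Complex.ofRealCLM.comp (fderiv ℝ f p)) p :=
  Complex.ofRealCLM.hasFDerivAt.comp p hf.hasFDerivAt

theorem wirtinger_ofReal (hf : DifferentiableAt ℝ f p) :
    wirtinger (fun q => (f q : ℂ)) p = conj (grad f p) := by
  apply Complex.ext <;> simp [wirtinger, (hasFDerivAt_ofReal_comp hf).fderiv, grad, d1, d3]

theorem wirtingerConj_ofReal (hf : DifferentiableAt ℝ f p) :
    wirtingerConj (fun q => (f q : ℂ)) p = grad f p := by
  apply Complex.ext <;> simp [wirtingerConj, (hasFDerivAt_ofReal_comp hf).fderiv, grad, d1, d3]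

theorem wirtinger_smul (hf : DifferentiableAt ℝ f p) (hV : DifferentiableAt ℝ V p) :
    wirtinger (fun q => f q • V q) p = f p * wirtinger V p + conj (grad f p) * V p := by
  simp only [Complex.real_smul]
  rw [wirtinger_mul (hasFDerivAt_ofReal_comp hf).differentiableAt hV, wirtinger_ofReal hf,
    mul_comm (V p)]

theorem eventually_differentiableAt (hf : ContDiffAt ℝ 2 f p) :
    ∀ᶠ q in 𝓝 p, DifferentiableAt ℝ f q :=
  (hf.eventually (by simp)).mono fun _ hq => hq.differentiableAt two_ne_zero

theorem contDiffAt_grad {m n : WithTop ℕ∞} (hf : ContDiffAt ℝ n f p) (hmn : m + 1 ≤ n) :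
    ContDiffAt ℝ m (grad f) p :=
  Complex.equivRealProdCLM.symm.contDiff.contDiffAt.comp p
    (((hf.fderiv_right hmn).clm_apply (contDiffAt_const (c := ((1, 0) : ℝ × ℝ)))).prodMk
      ((hf.fderiv_right hmn).clm_apply (contDiffAt_const (c := ((0, 1) : ℝ × ℝ)))))

theorem differentiableAt_grad (hf : ContDiffAt ℝ 2 f p) : DifferentiableAt ℝ (grad f) p :=
  (contDiffAt_grad hf (m := 1) one_add_one_eq_two.le).differentiableAt one_ne_zero

theorem differentiableAt_fderiv {E : Type*} [NormedAddCommGroup E] [NormedSpace ℝ E]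
    {h : ℝ × ℝ → E} (hh : ContDiffAt ℝ 2 h p) : DifferentiableAt ℝ (fderiv ℝ h) p :=
  (hh.fderiv_right (m := 1) one_add_one_eq_two.le).differentiableAt one_ne_zero

theorem fderiv_fderiv_apply_comm {E : Type*} [NormedAddCommGroup E] [NormedSpace ℝ E]
    {h : ℝ × ℝ → E} (hh : ContDiffAt ℝ 2 h p) (v w : ℝ × ℝ) :
    fderiv ℝ (fun q => fderiv ℝ h q v) p w = fderiv ℝ (fun q => fderiv ℝ h q w) p v := by
  have second_derivative (v w : ℝ × ℝ) :
      fderiv ℝ (fun q => fderiv ℝ h q v) p w = fderiv ℝ (fderiv ℝ h) p w v := by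
    rw [fderiv_clm_apply (differentiableAt_fderiv hh) (differentiableAt_const v)]
    simp
  rw [second_derivative, second_derivative]
  exact hh.isSymmSndFDerivAt (by simp) w v

theorem d3_d1_eq_d1_d3 (hf : ContDiffAt ℝ 2 f p) : d3 (d1 f) p = d1 (d3 f) p :=
  fderiv_fderiv_apply_comm hf (1, 0) (0, 1)

theorem differentiableAt_wirtinger (hV : ContDiffAt ℝ 2 V p) :
    DifferentiableAt ℝ (wirtinger V) p := by
  have h := differentiableAt_fderiv hV
  unfold wirtinger
  fun_prop

theorem differentiableAt_wirtingerConj (hV : ContDiffAt ℝ 2 V p) :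
    DifferentiableAt ℝ (wirtingerConj V) p := by
  have h := differentiableAt_fderiv hV
  unfold wirtingerConj
  fun_prop

theorem wirtinger_wirtingerConj (hV : ContDiffAt ℝ 2 V p) :
    wirtinger (wirtingerConj V) p = wirtingerConj (wirtinger V) p := by
  have h := differentiableAt_fderiv hV
  have h₁ : DifferentiableAt ℝ (fun q => fderiv ℝ V q (1, 0)) p := by fun_prop
  have h₃ : DifferentiableAt ℝ (fun q => fderiv ℝ V q (0, 1)) p := by fun_prop
  unfold wirtinger wirtingerConj
  rw [fderiv_fun_add h₁ (h₃.const_mul _), fderiv_fun_sub h₁ (h₃.const_mul _),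
    fderiv_const_mul h₃]
  simp only [add_apply, sub_apply, smul_apply, smul_eq_mul]
  rw [fderiv_fderiv_apply_comm hV (0, 1) (1, 0)]
  ring

theorem fderiv_grad_apply (hf : ContDiffAt ℝ 2 f p) (v : ℝ × ℝ) :
    fderiv ℝ (grad f) p v = ⟨fderiv ℝ (d1 f) p v, fderiv ℝ (d3 f) p v⟩ := by
  have h := differentiableAt_grad hf
  apply Complex.ext
  · exact congr($((Complex.reCLM.hasFDerivAt.comp p h.hasFDerivAt).fderiv) v).symm
  · exact congr($((Complex.imCLM.hasFDerivAt.comp p h.hasFDerivAt).fderiv) v).symm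

theorem wirtinger_grad (hf : ContDiffAt ℝ 2 f p) : wirtinger (grad f) p = lap f p := by
  have f_symm := d3_d1_eq_d1_d3 hf
  rw [wirtinger, fderiv_grad_apply hf, fderiv_grad_apply hf]
  apply Complex.ext <;> simp_all [lap, d1, d3]

theorem wirtingerConj_grad (hf : ContDiffAt ℝ 2 f p) :
    wirtingerConj (grad f) p = ⟨d1 (d1 f) p - d3 (d3 f) p, 2 * d1 (d3 f) p⟩ := by
  have f_symm := d3_d1_eq_d1_d3 hf
  rw [wirtingerConj, fderiv_grad_apply hf, fderiv_grad_apply hf, two_mul]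
  nth_rw 2 [← f_symm]
  apply Complex.ext <;> simp [sub_eq_add_neg, d1, d3]

theorem wirtinger_wirtingerConj_grad (hf : ContDiffAt ℝ 3 f p) :
    wirtinger (wirtingerConj (grad f)) p = grad (lap f) p := by
  have hgrad : ContDiffAt ℝ 2 (grad f) p := contDiffAt_grad hf two_add_one_eq_three.le
  have lap_eq : (fun q => (lap f q : ℂ)) =ᶠ[𝓝 p] wirtinger (grad f) :=
    (hf.eventually (by simp)).mono fun q hq => (wirtinger_grad (hq.of_le (by norm_num))).symm
  have differentiableAt_ofReal_lap : DifferentiableAt ℝ (fun q => (lap f q : ℂ)) p :=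
    (differentiableAt_wirtinger hgrad).congr_of_eventuallyEq lap_eq
  have differentiableAt_lap : DifferentiableAt ℝ (lap f) p :=
    Complex.reCLM.differentiableAt.comp p differentiableAt_ofReal_lap
  rw [wirtinger_wirtingerConj hgrad, ← wirtingerConj_congr lap_eq,
    wirtingerConj_ofReal differentiableAt_lap]

theorem lap_add (hf : ContDiffAt ℝ 2 f p) (hg : ContDiffAt ℝ 2 g p) :
    lap (fun q => f q + g q) p = lap f p + lap g p := by
  have h : grad (fun q => f q + g q) =ᶠ[𝓝 p] fun q => grad f q + grad g q := by
    filter_upwards [eventually_differentiableAt hf, eventually_differentiableAt hg]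
      with q using grad_add
  apply Complex.ofReal_injective
  rw [Complex.ofReal_add, ← wirtinger_grad (hf.add hg), wirtinger_congr h,
    wirtinger_add (differentiableAt_grad hf) (differentiableAt_grad hg), wirtinger_grad hf,
    wirtinger_grad hg]

theorem lap_mul (hf : ContDiffAt ℝ 2 f p) (hg : ContDiffAt ℝ 2 g p) :
    lap (fun q => f q * g q) p =
      f p * lap g p + g p * lap f p + 2 * ⟪grad f p, grad g p⟫ := by
  have h : grad (fun q => f q * g q) =ᶠ[𝓝 p] fun q => f q • grad g q + g q • grad f q := by
    filter_upwards [eventually_differentiableAt hf, eventually_differentiableAt hg]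
      with q using grad_mul
  have hf' := hf.differentiableAt two_ne_zero
  have hg' := hg.differentiableAt two_ne_zero
  have hf'' := differentiableAt_grad hf
  have hg'' := differentiableAt_grad hg
  apply Complex.ofReal_injective
  rw [← wirtinger_grad (hf.mul hg), wirtinger_congr h,
    wirtinger_add (by fun_prop) (by fun_prop), wirtinger_smul hf' hg'',
    wirtinger_smul hg' hf'', wirtinger_grad hf, wirtinger_grad hg]
  push_cast [ofReal_inner_eq]
  ring

theorem lap_const_mul (r : ℝ) : lap (fun q => r * f q) p = r * lap f p := by
  have fderiv_const_mul (h : ℝ × ℝ → ℝ) (q v : ℝ × ℝ) :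
      fderiv ℝ (fun x => r * h x) q v = r * fderiv ℝ h q v :=
    congr($(fderiv_const_smul_field (𝕜 := ℝ) (f := h) r) q v)
  unfold lap d1 d3
  simp only [fderiv_const_mul, mul_add]

theorem grad_const_mul (r : ℝ) (hf : DifferentiableAt ℝ f p) :
    grad (fun q => r * f q) p = r • grad f p :=
  grad_comp (by simpa using (hasDerivAt_id (f p)).const_mul r) hf

theorem hasDerivAt_exp_const_mul (r s : ℝ) :
    HasDerivAt (fun t => exp (r * t)) (r * exp (r * s)) s := by
  simpa [mul_comm] using ((hasDerivAt_id s).const_mul r).exp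

theorem grad_exp_const_mul (r : ℝ) (hf : DifferentiableAt ℝ f p) :
    grad (fun q => exp (r * f q)) p = (r * exp (r * f p)) • grad f p :=
  grad_comp (hasDerivAt_exp_const_mul r _) hf

theorem lap_exp_const_mul (r : ℝ) (hf : ContDiffAt ℝ 2 f p) :
    lap (fun q => exp (r * f q)) p =
      r * exp (r * f p) * (lap f p + r * ⟪grad f p, grad f p⟫) := by
  have h : grad (fun q => exp (r * f q)) =ᶠ[𝓝 p] fun q => (r * exp (r * f q)) • grad f q := by
    filter_upwards [eventually_differentiableAt hf] with q using grad_exp_const_mul r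
  have hf' := hf.differentiableAt two_ne_zero
  have grad_coeff : grad (fun q => r * exp (r * f q)) p = (r * (r * exp (r * f p))) • grad f p :=
    grad_comp ((hasDerivAt_exp_const_mul r _).const_mul r) hf'
  have hexp : ContDiffAt ℝ 2 (fun q => exp (r * f q)) p := by fun_prop
  apply Complex.ofReal_injective
  rw [← wirtinger_grad hexp, wirtinger_congr h,
    wirtinger_smul (by fun_prop) (differentiableAt_grad hf), wirtinger_grad hf, grad_coeff]
  simp only [Complex.real_smul, map_mul, Complex.conj_ofReal]
  push_cast [ofReal_inner_eq]
  ring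

/-- The weighted divergence `div (∇f / w)`. -/
noncomputable def weightedLap (w f : ℝ × ℝ → ℝ) (p : ℝ × ℝ) : ℝ :=
  d1 (fun q => d1 f q / w q) p + d3 (fun q => d3 f q / w q) p

theorem weightedLap_eq {w : ℝ × ℝ → ℝ} (hw : DifferentiableAt ℝ w p) (hw₀ : w p ≠ 0)
    (hf : ContDiffAt ℝ 2 f p) :
    weightedLap w f p = lap f p / w p - ⟪grad f p, grad w p⟫ / w p ^ 2 := by
  have hf₁ : DifferentiableAt ℝ (d1 f) p :=
    Complex.reCLM.differentiableAt.comp p (differentiableAt_grad hf)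
  have hf₃ : DifferentiableAt ℝ (d3 f) p :=
    Complex.imCLM.differentiableAt.comp p (differentiableAt_grad hf)
  have h₁ := congr(($(grad_div hf₁ hw hw₀)).re)
  have h₃ := congr(($(grad_div hf₃ hw hw₀)).im)
  simp only [grad, Complex.sub_re, Complex.sub_im, Complex.smul_re, Complex.smul_im,
    smul_eq_mul] at h₁ h₃
  rw [weightedLap, inner_grad_grad, h₁, h₃, lap]
  ring

end PlaneCalculus

/-- The metric potentials `F`, `A`, `Π` (written `Pt`) and `K` of a stationary axisymmetric
metric. -/
structure MetricPotentials where
  F : ℝ × ℝ → ℝ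
  A : ℝ × ℝ → ℝ
  Pt : ℝ × ℝ → ℝ
  K : ℝ × ℝ → ℝ

namespace MetricPotentials

variable (g : MetricPotentials) (p : ℝ × ℝ)

/-- The metric coefficient `f`. -/
noncomputable def f : ℝ := exp (2 * g.F p)

/-- The metric coefficient `k`. -/
noncomputable def k : ℝ := -exp (2 * g.F p) * g.A p

/-- The metric coefficient `l`. -/
noncomputable def l : ℝ := -exp (2 * g.F p) * g.A p ^ 2 + exp (-(2 * g.F p)) * g.Pt p ^ 2

/-- The exponent `m` of the conformal factor of the `(ϖ, z)`-part of the metric. -/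
noncomputable def m : ℝ := 2 * (-g.F p + g.K p)

/-- The quadratic gradient term `Σ` of the Ricci components. -/
noncomputable def sigma : ℝ :=
  d1 g.f p * d1 g.l p + d3 g.f p * d3 g.l p + d1 g.k p ^ 2 + d3 g.k p ^ 2

/-- The quantity `E = e^{2G}` of an observer rotating with angular velocity `c w`. -/
noncomputable def corot (w : ℝ) : ℝ :=
  exp (2 * g.F p) * (1 + w * g.A p) ^ 2 - exp (-(2 * g.F p)) * w ^ 2 * g.Pt p ^ 2

/-- The Ricci component `R₀₀`. -/
noncomputable def ricci00 : ℝ :=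
  (weightedLap g.Pt g.f p + g.f p * g.sigma p / g.Pt p ^ 3) / (2 * exp (g.m p) / g.Pt p)

/-- The Ricci component `R₀₂`. -/
noncomputable def ricci02 : ℝ :=
  -(weightedLap g.Pt g.k p + g.k p * g.sigma p / g.Pt p ^ 3) / (2 * exp (g.m p) / g.Pt p)

/-- The Ricci component `R₂₂`. -/
noncomputable def ricci22 : ℝ :=
  -(weightedLap g.Pt g.l p + g.l p * g.sigma p / g.Pt p ^ 3) / (2 * exp (g.m p) / g.Pt p)

/-- The Ricci component `R₁₁`. -/
noncomputable def ricci11 : ℝ :=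
  (-(d1 (d1 g.m) p) - d3 (d3 g.m) p - 2 * d1 (d1 g.Pt) p / g.Pt p
    + (1 / g.Pt p) * (d1 g.m p * d1 g.Pt p - d3 g.m p * d3 g.Pt p)
    + (1 / g.Pt p ^ 2) * (d1 g.f p * d1 g.l p + d1 g.k p ^ 2)) / 2

/-- The Ricci component `R₃₃`. -/
noncomputable def ricci33 : ℝ :=
  (-(d1 (d1 g.m) p) - d3 (d3 g.m) p - 2 * d3 (d3 g.Pt) p / g.Pt p
    - (1 / g.Pt p) * (d1 g.m p * d1 g.Pt p - d3 g.m p * d3 g.Pt p)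
    + (1 / g.Pt p ^ 2) * (d3 g.f p * d3 g.l p + d3 g.k p ^ 2)) / 2

/-- The Ricci component `R₁₃`. -/
noncomputable def ricci13 : ℝ :=
  (-(2 * d1 (d3 g.Pt) p / g.Pt p)
    + (1 / g.Pt p) * (d3 g.m p * d1 g.Pt p + d1 g.m p * d3 g.Pt p)
    + (1 / (2 * g.Pt p ^ 2)) *
      (d1 g.f p * d3 g.l p + d1 g.l p * d3 g.f p + 2 * d1 g.k p * d3 g.k p)) / 2

/-- The left-hand side of (N.9a). -/
noncomputable def fieldF : ℝ :=
  lap g.F p + (1 / g.Pt p) * ⟪grad g.Pt p, grad g.F p⟫ +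
    exp (4 * g.F p) / (2 * g.Pt p ^ 2) * ⟪grad g.A p, grad g.A p⟫

/-- The left-hand side of (N.9b). -/
noncomputable def fieldA : ℝ :=
  lap g.A p - (1 / g.Pt p) * ⟪grad g.Pt p, grad g.A p⟫ + 4 * ⟪grad g.F p, grad g.A p⟫

/-- The left-hand side of the second-order equation for `K`, which is implied by the reduced
equations. -/
noncomputable def fieldK : ℝ :=
  lap g.K p + ⟪grad g.F p, grad g.F p⟫ +
    exp (4 * g.F p) / (4 * g.Pt p ^ 2) * ⟪grad g.A p, grad g.A p⟫

/-- The difference of the two sides of (Ya), plus `i` times that of (Yb). -/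
noncomputable def constraint : ℂ :=
  grad g.Pt p * grad g.K p + (exp (4 * g.F p) / (4 * g.Pt p)) • grad g.A p ^ 2 -
    ((1 / 2 : ℝ) • wirtingerConj (grad g.Pt) p + g.Pt p • grad g.F p ^ 2)

/-- The four potentials are `C²` near `p`. -/
structure IsC2At : Prop where
  F : ContDiffAt ℝ 2 g.F p
  A : ContDiffAt ℝ 2 g.A p
  Pt : ContDiffAt ℝ 2 g.Pt p
  K : ContDiffAt ℝ 2 g.K p

variable {g p}

theorem f_pos : 0 < g.f p := exp_pos _

theorem exp_neg_two_mul_F : exp (-(2 * g.F p)) = (g.f p)⁻¹ := exp_neg _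

theorem exp_four_mul_F : exp (4 * g.F p) = g.f p ^ 2 := by
  rw [f, ← exp_nat_mul]
  ring_nf

theorem k_eq : g.k p = -(g.f p * g.A p) := neg_mul _ _

theorem l_eq : g.l p = -(g.f p * g.A p ^ 2) + (g.f p)⁻¹ * g.Pt p ^ 2 := by
  rw [l, exp_neg_two_mul_F, neg_mul, f]

theorem k_eq_fun : g.k = fun q => -1 * (exp (2 * g.F q) * g.A q) := by
  ext q
  rw [k]
  ring

theorem l_eq_fun :
    g.l = fun q => g.k q * g.A q + exp (-2 * g.F q) * (g.Pt q * g.Pt q) := by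
  ext q
  rw [l, k]
  ring_nf

theorem grad_f (hF : DifferentiableAt ℝ g.F p) : grad g.f p = (2 * g.f p) • grad g.F p :=
  grad_exp_const_mul 2 hF

theorem grad_k (hF : DifferentiableAt ℝ g.F p) (hA : DifferentiableAt ℝ g.A p) :
    grad g.k p = (2 * g.k p) • grad g.F p - g.f p • grad g.A p := by
  have hf : DifferentiableAt ℝ (fun q => exp (2 * g.F q)) p := by fun_prop
  have hk := congrFun (k_eq_fun (g := g)) p
  rw [hk, k_eq_fun, grad_const_mul _ (hf.fun_mul hA), grad_mul hf hA, grad_exp_const_mul 2 hF, f]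
  module

theorem grad_l (hF : DifferentiableAt ℝ g.F p) (hA : DifferentiableAt ℝ g.A p)
    (hPt : DifferentiableAt ℝ g.Pt p) :
    grad g.l p = (2 * (g.k p * g.A p - (g.f p)⁻¹ * g.Pt p ^ 2)) • grad g.F p +
      (2 * g.k p) • grad g.A p + (2 * (g.f p)⁻¹ * g.Pt p) • grad g.Pt p := by
  have hh : DifferentiableAt ℝ (fun q => exp (-2 * g.F q)) p := by fun_prop
  have hk : DifferentiableAt ℝ g.k p := by unfold k; fun_prop
  rw [l_eq_fun, grad_add (hk.fun_mul hA) (hh.fun_mul (hPt.fun_mul hPt)), grad_mul hk hA,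
    grad_mul hh (hPt.fun_mul hPt), grad_mul hPt hPt, grad_exp_const_mul (-2) hF, grad_k hF hA,
    neg_mul, exp_neg_two_mul_F, k_eq]
  module

theorem contDiffAt_k (h : g.IsC2At p) : ContDiffAt ℝ 2 g.k p :=
  (h.F.const_smul (2 : ℝ)).exp.neg.mul h.A

theorem contDiffAt_l (h : g.IsC2At p) : ContDiffAt ℝ 2 g.l p := by
  have hk := contDiffAt_k h
  have hF := h.F
  have hA := h.A
  have hPt := h.Pt
  rw [l_eq_fun]
  fun_prop

theorem lap_f (h : g.IsC2At p) :
    lap g.f p = 2 * g.f p * (lap g.F p + 2 * ⟪grad g.F p, grad g.F p⟫) :=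
  lap_exp_const_mul 2 h.F

theorem lap_k (h : g.IsC2At p) :
    lap g.k p = g.k p * (2 * lap g.F p + 4 * ⟪grad g.F p, grad g.F p⟫) - g.f p * lap g.A p -
      4 * g.f p * ⟪grad g.F p, grad g.A p⟫ := by
  have hf : ContDiffAt ℝ 2 (fun q => exp (2 * g.F q)) p := contDiffAt_const.mul h.F |>.exp
  rw [k_eq_fun, lap_const_mul, lap_mul hf h.A, lap_exp_const_mul 2 h.F,
    grad_exp_const_mul 2 (h.F.differentiableAt two_ne_zero), real_inner_smul_left, f]
  ring

theorem lap_l (h : g.IsC2At p) :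
    lap g.l p = g.k p * g.A p * (2 * lap g.F p + 4 * ⟪grad g.F p, grad g.F p⟫) +
      2 * g.k p * lap g.A p + 8 * g.k p * ⟪grad g.F p, grad g.A p⟫ -
      2 * g.f p * ⟪grad g.A p, grad g.A p⟫ +
      (g.f p)⁻¹ * (2 * g.Pt p * lap g.Pt p + 2 * ⟪grad g.Pt p, grad g.Pt p⟫ -
        8 * g.Pt p * ⟪grad g.Pt p, grad g.F p⟫ +
        g.Pt p ^ 2 * (4 * ⟪grad g.F p, grad g.F p⟫ - 2 * lap g.F p)) := by
  have hh : ContDiffAt ℝ 2 (fun q => exp (-2 * g.F q)) p := contDiffAt_const.mul h.F |>.exp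
  have hk := contDiffAt_k h
  have dF := h.F.differentiableAt two_ne_zero
  have dA := h.A.differentiableAt two_ne_zero
  have dPt := h.Pt.differentiableAt two_ne_zero
  rw [l_eq_fun, lap_add (hk.mul h.A) (hh.mul (h.Pt.mul h.Pt)), lap_mul hk h.A,
    lap_mul hh (h.Pt.mul h.Pt), lap_mul h.Pt h.Pt, lap_k h, lap_exp_const_mul (-2) h.F,
    grad_exp_const_mul (-2) dF, grad_mul dPt dPt, grad_k dF dA, neg_mul, exp_neg_two_mul_F,
    real_inner_comm (grad g.F p) (grad g.Pt p)]
  simp only [inner_add_right, inner_sub_left, real_inner_smul_left, real_inner_smul_right, k_eq]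
  ring

theorem sigma_eq (h : g.IsC2At p) :
    g.sigma p = -4 * g.Pt p ^ 2 * ⟪grad g.F p, grad g.F p⟫ +
      4 * g.Pt p * ⟪grad g.Pt p, grad g.F p⟫ + g.f p ^ 2 * ⟪grad g.A p, grad g.A p⟫ := by
  have dF := h.F.differentiableAt two_ne_zero
  have dA := h.A.differentiableAt two_ne_zero
  have dPt := h.Pt.differentiableAt two_ne_zero
  have sigma_eq_inner :
      g.sigma p = ⟪grad g.f p, grad g.l p⟫ + ⟪grad g.k p, grad g.k p⟫ := by
    simp only [sigma, inner_grad_grad]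
    ring
  have hf := (f_pos (g := g) (p := p)).ne'
  rw [sigma_eq_inner, grad_f dF, grad_k dF dA, grad_l dF dA dPt]
  simp only [inner_add_right, inner_sub_left, inner_sub_right, real_inner_smul_left,
    real_inner_smul_right, real_inner_comm (grad g.F p) (grad g.A p),
    real_inner_comm (grad g.Pt p) (grad g.F p), k_eq]
  field_simp
  ring

theorem ricci00_eq (h : g.IsC2At p) (hPt₀ : g.Pt p ≠ 0) :
    g.ricci00 p = g.f p * g.fieldF p / exp (g.m p) := by
  have hf := (f_pos (g := g) (p := p)).ne'
  have contDiffAt_f : ContDiffAt ℝ 2 g.f p := contDiffAt_const.mul h.F |>.exp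
  rw [ricci00, weightedLap_eq (h.Pt.differentiableAt two_ne_zero) hPt₀ contDiffAt_f,
    sigma_eq h, lap_f h, grad_f (h.F.differentiableAt two_ne_zero), fieldF, exp_four_mul_F,
    real_inner_smul_left, real_inner_comm (grad g.Pt p) (grad g.F p)]
  field_simp
  ring

theorem ricci02_eq (h : g.IsC2At p) (hPt₀ : g.Pt p ≠ 0) :
    g.ricci02 p = (g.f p * g.fieldA p / 2 - g.k p * g.fieldF p) / exp (g.m p) := by
  have hf := (f_pos (g := g) (p := p)).ne'
  have dF := h.F.differentiableAt two_ne_zero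
  have dA := h.A.differentiableAt two_ne_zero
  rw [ricci02, weightedLap_eq (h.Pt.differentiableAt two_ne_zero) hPt₀ (contDiffAt_k h),
    sigma_eq h, lap_k h, grad_k dF dA, fieldF, fieldA, exp_four_mul_F]
  simp only [inner_sub_left, real_inner_smul_left, real_inner_comm (grad g.Pt p) (grad g.F p),
    real_inner_comm (grad g.Pt p) (grad g.A p), k_eq]
  field_simp
  ring

theorem ricci22_eq (h : g.IsC2At p) (hPt₀ : g.Pt p ≠ 0) :
    g.ricci22 p = ((g.f p * g.A p ^ 2 + (g.f p)⁻¹ * g.Pt p ^ 2) * g.fieldF p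
      + g.f p * g.A p * g.fieldA p - (g.f p)⁻¹ * g.Pt p * lap g.Pt p) / exp (g.m p) := by
  have hf := (f_pos (g := g) (p := p)).ne'
  have dF := h.F.differentiableAt two_ne_zero
  have dA := h.A.differentiableAt two_ne_zero
  have dPt := h.Pt.differentiableAt two_ne_zero
  rw [ricci22, weightedLap_eq dPt hPt₀ (contDiffAt_l h), sigma_eq h, lap_l h, grad_l dF dA dPt,
    fieldF, fieldA, exp_four_mul_F]
  simp only [inner_add_left, real_inner_smul_left, real_inner_comm (grad g.Pt p) (grad g.F p),
    real_inner_comm (grad g.Pt p) (grad g.A p), k_eq, l_eq]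
  field_simp
  ring

theorem m_eq_fun : g.m = fun q => 2 * (g.K q + -1 * g.F q) := by
  ext q
  rw [m]
  ring

theorem grad_m (h : g.IsC2At p) : grad g.m p = (2 : ℝ) • (grad g.K p - grad g.F p) := by
  have dF := h.F.differentiableAt two_ne_zero
  have dK := h.K.differentiableAt two_ne_zero
  rw [m_eq_fun, grad_const_mul _ (dK.fun_add (dF.const_mul _)), grad_add dK (dF.const_mul _),
    grad_const_mul _ dF]
  module

theorem lap_m (h : g.IsC2At p) : lap g.m p = 2 * (lap g.K p - lap g.F p) := by
  rw [m_eq_fun, lap_const_mul, lap_add h.K (contDiffAt_const.mul h.F), lap_const_mul]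
  ring

theorem ricci11_add_ricci33 (h : g.IsC2At p) (hPt₀ : g.Pt p ≠ 0) :
    g.ricci11 p + g.ricci33 p = 2 * g.fieldF p - 2 * g.fieldK p - lap g.Pt p / g.Pt p := by
  have ricci_trace : g.ricci11 p + g.ricci33 p =
      -lap g.m p - lap g.Pt p / g.Pt p + g.sigma p / (2 * g.Pt p ^ 2) := by
    simp only [ricci11, ricci33, lap, sigma]
    ring
  rw [ricci_trace, lap_m h, sigma_eq h, fieldF, fieldK, exp_four_mul_F]
  field_simp
  ring

theorem ricci_traceFree_eq (h : g.IsC2At p) (hPt₀ : g.Pt p ≠ 0) :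
    (⟨g.ricci11 p - g.ricci33 p, 2 * g.ricci13 p⟩ : ℂ) = (2 / g.Pt p) • g.constraint p := by
  have dF := h.F.differentiableAt two_ne_zero
  have dA := h.A.differentiableAt two_ne_zero
  have dPt := h.Pt.differentiableAt two_ne_zero
  have ricci_eq_grad : (⟨g.ricci11 p - g.ricci33 p, 2 * g.ricci13 p⟩ : ℂ) =
      (g.Pt p)⁻¹ • (grad g.m p * grad g.Pt p - wirtingerConj (grad g.Pt) p) +
        (2 * g.Pt p ^ 2)⁻¹ • (grad g.f p * grad g.l p + grad g.k p ^ 2) := by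
    rw [wirtingerConj_grad h.Pt]
    apply Complex.ext <;>
      simp only [ricci11, ricci33, ricci13, grad, pow_two, Complex.add_re, Complex.add_im,
        Complex.sub_re, Complex.sub_im, Complex.smul_re, Complex.smul_im, Complex.mul_re,
        Complex.mul_im, smul_eq_mul] <;>
      ring
  have hf := Complex.ofReal_ne_zero.mpr (f_pos (g := g) (p := p)).ne'
  have hPt := Complex.ofReal_ne_zero.mpr hPt₀
  rw [ricci_eq_grad, grad_m h, grad_f dF, grad_k dF dA, grad_l dF dA dPt, constraint,
    exp_four_mul_F, k_eq]
  simp only [Complex.real_smul]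
  push_cast
  field_simp
  ring

theorem constraint_re (h : ContDiffAt ℝ 2 g.Pt p) :
    (g.constraint p).re = d1 g.Pt p * d1 g.K p - d3 g.Pt p * d3 g.K p -
      ((1 / 2) * (d1 (d1 g.Pt) p - d3 (d3 g.Pt) p) +
        g.Pt p * (d1 g.F p ^ 2 - d3 g.F p ^ 2) -
        exp (4 * g.F p) / (4 * g.Pt p) * (d1 g.A p ^ 2 - d3 g.A p ^ 2)) := by
  simp only [constraint, wirtingerConj_grad h, grad, pow_two, Complex.add_re, Complex.sub_re,
    Complex.smul_re, Complex.mul_re, smul_eq_mul]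
  ring

theorem constraint_im (h : ContDiffAt ℝ 2 g.Pt p) :
    (g.constraint p).im = d3 g.Pt p * d1 g.K p + d1 g.Pt p * d3 g.K p -
      (d1 (d3 g.Pt) p + 2 * g.Pt p * d1 g.F p * d3 g.F p -
        exp (4 * g.F p) / (2 * g.Pt p) * (d1 g.A p * d3 g.A p)) := by
  simp only [constraint, wirtingerConj_grad h, grad, pow_two, Complex.add_im, Complex.sub_im,
    Complex.smul_im, Complex.mul_im, smul_eq_mul]
  ring

theorem constraint_eq_zero_iff (h : g.IsC2At p) (hPt₀ : g.Pt p ≠ 0) :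
    g.constraint p = 0 ↔ g.ricci11 p = g.ricci33 p ∧ g.ricci13 p = 0 := by
  rw [← smul_eq_zero_iff_right (div_ne_zero two_ne_zero hPt₀), ← ricci_traceFree_eq h hPt₀,
    Complex.ext_iff]
  simp [sub_eq_zero]

theorem grad_exp_four_mul_F_div (hF : DifferentiableAt ℝ g.F p) (hPt : DifferentiableAt ℝ g.Pt p)
    (hPt₀ : g.Pt p ≠ 0) :
    grad (fun q => exp (4 * g.F q) / (4 * g.Pt q)) p =
      (exp (4 * g.F p) / g.Pt p) • grad g.F p -
        (exp (4 * g.F p) / (4 * g.Pt p ^ 2)) • grad g.Pt p := by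
  have hexp : DifferentiableAt ℝ (fun q => exp (4 * g.F q)) p := by fun_prop
  rw [grad_div hexp (hPt.const_mul 4) (by simpa), grad_exp_const_mul 4 hF, grad_const_mul 4 hPt]
  match_scalars <;> field_simp

-- The contracted Bianchi identity: the conformal factor turns the divergence of the trace-free
-- part of the `(ϖ, z)`-block of the Ricci tensor into combinations of the other components.
theorem wirtinger_constraint (hF : ContDiffAt ℝ 2 g.F p) (hA : ContDiffAt ℝ 2 g.A p)
    (hPt : ContDiffAt ℝ 3 g.Pt p) (hK : ContDiffAt ℝ 2 g.K p) (hPt₀ : g.Pt p ≠ 0) :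
    wirtinger g.constraint p =
      g.fieldK p • grad g.Pt p - (1 / 2 : ℝ) • grad (lap g.Pt) p + lap g.Pt p • grad g.K p -
        (2 * g.Pt p * g.fieldF p) • grad g.F p +
        (exp (4 * g.F p) / (2 * g.Pt p) * g.fieldA p) • grad g.A p := by
  have hPt' : ContDiffAt ℝ 2 g.Pt p := hPt.of_le (by norm_num)
  have dF := hF.differentiableAt two_ne_zero
  have dPt := hPt'.differentiableAt two_ne_zero
  have dF' := differentiableAt_grad hF
  have dA' := differentiableAt_grad hA
  have dPt' := differentiableAt_grad hPt'
  have dK' := differentiableAt_grad hK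
  have dHess := differentiableAt_wirtingerConj (contDiffAt_grad hPt two_add_one_eq_three.le)
  have dCoeff : DifferentiableAt ℝ (fun q => exp (4 * g.F q) / (4 * g.Pt q)) p :=
    by fun_prop (disch := simpa)
  unfold constraint
  rw [wirtinger_sub (by fun_prop) (by fun_prop), wirtinger_add (by fun_prop) (by fun_prop),
    wirtinger_add (by fun_prop) (by fun_prop), wirtinger_mul dPt' dK',
    wirtinger_smul dCoeff (dA'.fun_pow 2), wirtinger_const_smul, wirtinger_smul dPt (dF'.fun_pow 2),
    wirtinger_sq dA', wirtinger_sq dF', wirtinger_wirtingerConj_grad hPt,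
    grad_exp_four_mul_F_div dF dPt hPt₀, wirtinger_grad hF, wirtinger_grad hA, wirtinger_grad hPt',
    wirtinger_grad hK, fieldF, fieldA, fieldK]
  have hPt_ne := Complex.ofReal_ne_zero.mpr hPt₀
  simp only [Complex.real_smul, map_sub, map_mul, Complex.conj_ofReal]
  push_cast [ofReal_inner_eq]
  field_simp
  ring

end MetricPotentials

/-- A perfect fluid in circular motion: energy density `ε = c²ρ`, pressure `P`, and angular velocity
`ω = Ω/c`. -/
structure RotatingFluid where
  ε : ℝ × ℝ → ℝ
  P : ℝ × ℝ → ℝ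
  ω : ℝ × ℝ → ℝ

namespace RotatingFluid

variable (s : RotatingFluid) (κ : ℝ) (g : MetricPotentials) (p : ℝ × ℝ)

/-- The component `S₀₀` of the trace-reversed energy-momentum tensor. -/
noncomputable def stress00 : ℝ :=
  (1 / 2) * (s.ε p + s.P p) * (g.corot p (s.ω p))⁻¹ *
    ((g.f p - s.ω p * g.k p) ^ 2 + s.ω p ^ 2 * g.Pt p ^ 2) + s.P p * g.f p

/-- The component `S₀₂` of the trace-reversed energy-momentum tensor. -/
noncomputable def stress02 : ℝ :=
  (1 / 2) * (s.ε p + s.P p) * (g.corot p (s.ω p))⁻¹ *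
    (-(g.k p * g.f p) - 2 * s.ω p * g.f p * g.l p + s.ω p ^ 2 * g.k p * g.l p) - s.P p * g.k p

/-- The component `S₂₂` of the trace-reversed energy-momentum tensor. -/
noncomputable def stress22 : ℝ :=
  (1 / 2) * (s.ε p + s.P p) * (g.corot p (s.ω p))⁻¹ *
    (g.Pt p ^ 2 + (g.k p + s.ω p * g.l p) ^ 2) - s.P p * g.l p

/-- The components `S₁₁ = S₃₃` of the trace-reversed energy-momentum tensor. -/
noncomputable def stress11 : ℝ := exp (g.m p) / 2 * (s.ε p - s.P p)

/-- The right-hand side of (N.9a). -/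
noncomputable def sourceF : ℝ :=
  κ / 2 * exp (2 * (-g.F p + g.K p)) *
    ((s.ε p + s.P p) * (exp (2 * g.F p) * (1 + s.ω p * g.A p) ^ 2
      + exp (-(2 * g.F p)) * s.ω p ^ 2 * g.Pt p ^ 2) / g.corot p (s.ω p) + 2 * s.P p)

/-- The right-hand side of (N.9b). -/
noncomputable def sourceA : ℝ :=
  -(2 * κ) * exp (2 * (-g.F p + g.K p)) * (s.ε p + s.P p) *
    (exp (-(2 * g.F p)) * s.ω p * g.Pt p ^ 2 * (1 + s.ω p * g.A p)) / g.corot p (s.ω p)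

/-- The right-hand side of (N.9c). -/
noncomputable def sourcePt : ℝ := 2 * κ * exp (2 * (-g.F p + g.K p)) * s.P p * g.Pt p

/-- The right-hand side of the second-order equation for `K`. -/
noncomputable def sourceK : ℝ :=
  κ * exp (2 * (-g.F p + g.K p)) *
    ((s.ε p + s.P p) * (exp (-(2 * g.F p)) * s.ω p ^ 2 * g.Pt p ^ 2) / g.corot p (s.ω p) + s.P p)

/-- The Einstein system (36a)–(36f) at a point. -/
def EinsteinAt : Prop :=
  g.ricci00 p = κ * s.stress00 g p ∧ g.ricci02 p = κ * s.stress02 g p ∧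
    g.ricci22 p = κ * s.stress22 g p ∧ g.ricci11 p = κ * s.stress11 g p ∧
    g.ricci33 p = κ * s.stress11 g p ∧ g.ricci13 p = 0

/-- The reduced equations (N.9a), (N.9b), (N.9c), (Ya), (Yb) at a point, the last two combined into
one complex equation. -/
def ReducedAt : Prop :=
  g.fieldF p = s.sourceF κ g p ∧ g.fieldA p = s.sourceA κ g p ∧
    lap g.Pt p = s.sourcePt κ g p ∧ g.constraint p = 0

/-- The Euler equation `∇P = -(ε + P) ∇G` at `p`, where `e^{2G} = E`, in the form in which the
angular velocity is not differentiated: it is constant wherever `ε + P ≠ 0`. -/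
def EulerAt : Prop :=
  DifferentiableAt ℝ s.P p ∧
    grad s.P p = (-((s.ε p + s.P p) / (2 * g.corot p (s.ω p)))) • grad (g.corot · (s.ω p)) p

variable {s κ g p}

theorem kappa_mul_stress00 :
    κ * s.stress00 g p = g.f p * s.sourceF κ g p / exp (g.m p) := by
  have hm := exp_ne_zero (g.m p)
  have hf := (g.f_pos (p := p)).ne'
  rw [stress00, sourceF, g.exp_neg_two_mul_F, ← MetricPotentials.f, ← MetricPotentials.m, g.k_eq]
  field_simp
  ring

theorem kappa_mul_stress02 (hE : g.corot p (s.ω p) ≠ 0) :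
    κ * s.stress02 g p =
      (g.f p * s.sourceA κ g p / 2 - g.k p * s.sourceF κ g p) / exp (g.m p) := by
  have hm := exp_ne_zero (g.m p)
  have hf := (g.f_pos (p := p)).ne'
  rw [stress02, sourceA, sourceF, g.exp_neg_two_mul_F, ← MetricPotentials.f, ← MetricPotentials.m,
    g.k_eq, g.l_eq]
  field_simp
  ring

theorem kappa_mul_stress22 (hE : g.corot p (s.ω p) ≠ 0) :
    κ * s.stress22 g p = ((g.f p * g.A p ^ 2 + (g.f p)⁻¹ * g.Pt p ^ 2) * s.sourceF κ g p
      + g.f p * g.A p * s.sourceA κ g p - (g.f p)⁻¹ * g.Pt p * s.sourcePt κ g p) /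
        exp (g.m p) := by
  have hm := exp_ne_zero (g.m p)
  have hf := (g.f_pos (p := p)).ne'
  rw [stress22, sourceA, sourceF, sourcePt, g.exp_neg_two_mul_F, ← MetricPotentials.f,
    ← MetricPotentials.m, g.k_eq, g.l_eq]
  field_simp
  ring

theorem two_mul_kappa_mul_stress11 (hE : g.corot p (s.ω p) ≠ 0) (hPt₀ : g.Pt p ≠ 0) :
    2 * (κ * s.stress11 g p) =
      2 * s.sourceF κ g p - 2 * s.sourceK κ g p - s.sourcePt κ g p / g.Pt p := by
  have hf := (g.f_pos (p := p)).ne'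
  have corot_eq :
      g.f p * (1 + s.ω p * g.A p) ^ 2 = g.corot p (s.ω p) + (g.f p)⁻¹ * s.ω p ^ 2 * g.Pt p ^ 2 := by
    rw [MetricPotentials.corot, g.exp_neg_two_mul_F, MetricPotentials.f]
    ring
  rw [stress11, sourceF, sourceK, sourcePt, g.exp_neg_two_mul_F, ← MetricPotentials.f,
    ← MetricPotentials.m, corot_eq]
  field_simp
  ring

theorem einsteinAt_iff (h : g.IsC2At p) (hPt₀ : g.Pt p ≠ 0) (hE : g.corot p (s.ω p) ≠ 0) :
    s.EinsteinAt κ g p ↔ s.ReducedAt κ g p ∧ g.fieldK p = s.sourceK κ g p := by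
  have hm := exp_ne_zero (g.m p)
  have hf := (g.f_pos (p := p)).ne'
  have trace := MetricPotentials.ricci11_add_ricci33 h hPt₀
  have stress_trace := two_mul_kappa_mul_stress11 (κ := κ) hE hPt₀
  rw [EinsteinAt, ReducedAt, MetricPotentials.constraint_eq_zero_iff h hPt₀,
    MetricPotentials.ricci00_eq h hPt₀, MetricPotentials.ricci02_eq h hPt₀,
    MetricPotentials.ricci22_eq h hPt₀, kappa_mul_stress00, kappa_mul_stress02 hE,
    kappa_mul_stress22 hE, div_left_inj' hm, div_left_inj' hm, div_left_inj' hm,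
    mul_right_inj' hf]
  constructor
  · rintro ⟨hF, hA, hPt, h11, h33, h13⟩
    have hA' : g.fieldA p = s.sourceA κ g p := by
      rw [hF] at hA
      exact mul_left_cancel₀ hf (by linarith)
    have hPt' : lap g.Pt p = s.sourcePt κ g p := by
      rw [hF, hA'] at hPt
      exact mul_left_cancel₀ (mul_ne_zero (inv_ne_zero hf) hPt₀) (by linarith)
    refine ⟨⟨hF, hA', hPt', h11.trans h33.symm, h13⟩, ?_⟩
    rw [hF, hPt'] at trace
    linarith
  · rintro ⟨⟨hF, hA, hPt, h11_33, h13⟩, hK⟩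
    rw [hF, hK, hPt] at trace
    exact ⟨hF, by rw [hF, hA], by rw [hF, hA, hPt], by linarith, by linarith, h13⟩

theorem half_smul_grad_sourcePt (hF : DifferentiableAt ℝ g.F p) (hK : DifferentiableAt ℝ g.K p)
    (hPt : DifferentiableAt ℝ g.Pt p) (hP : DifferentiableAt ℝ s.P p) :
    (1 / 2 : ℝ) • grad (s.sourcePt κ g) p = (κ * exp (2 * (-g.F p + g.K p))) •
      ((2 * s.P p * g.Pt p) • (grad g.K p - grad g.F p) + g.Pt p • grad s.P p +
        s.P p • grad g.Pt p) := by
  have hFK : DifferentiableAt ℝ (fun q => -1 * g.F q + g.K q) p := by fun_prop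
  have sourcePt_eq_fun : s.sourcePt κ g =
      fun q => (2 * κ) * (exp (2 * (-1 * g.F q + g.K q)) * (s.P q * g.Pt q)) := by
    ext q
    rw [sourcePt, neg_one_mul]
    ring
  rw [sourcePt_eq_fun, grad_const_mul _ (by fun_prop), grad_mul (by fun_prop) (by fun_prop),
    grad_mul hP hPt, grad_exp_const_mul 2 hFK, grad_add (by fun_prop) hK, grad_const_mul _ hF,
    neg_one_mul]
  module

theorem grad_corot (w : ℝ) (hF : DifferentiableAt ℝ g.F p) (hA : DifferentiableAt ℝ g.A p)
    (hPt : DifferentiableAt ℝ g.Pt p) :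
    grad (g.corot · w) p =
      (2 * (g.f p * (1 + w * g.A p) ^ 2 + (g.f p)⁻¹ * w ^ 2 * g.Pt p ^ 2)) • grad g.F p +
        (2 * g.f p * w * (1 + w * g.A p)) • grad g.A p -
        (2 * (g.f p)⁻¹ * w ^ 2 * g.Pt p) • grad g.Pt p := by
  have hasDerivAt_affine_sq :
      HasDerivAt (fun a => (1 + w * a) ^ 2) (2 * w * (1 + w * g.A p)) (g.A p) := by
    refine (((hasDerivAt_id' (g.A p)).const_mul w).const_add 1).fun_pow 2 |>.congr_deriv ?_
    norm_num
    ring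
  have hasDerivAt_neg_sq :
      HasDerivAt (fun t => -w ^ 2 * t ^ 2) (-w ^ 2 * (2 * g.Pt p)) (g.Pt p) := by
    simpa using (hasDerivAt_pow 2 (g.Pt p)).const_mul (-w ^ 2)
  have corot_eq_fun : (g.corot · w) = fun q =>
      exp (2 * g.F q) * (1 + w * g.A q) ^ 2 + exp (-2 * g.F q) * (-w ^ 2 * g.Pt q ^ 2) := by
    ext q
    rw [MetricPotentials.corot]
    ring_nf
  rw [corot_eq_fun, grad_add (by fun_prop) (by fun_prop), grad_mul (by fun_prop) (by fun_prop),
    grad_mul (by fun_prop) (by fun_prop), grad_comp hasDerivAt_affine_sq hA,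
    grad_comp hasDerivAt_neg_sq hPt, grad_exp_const_mul _ hF, grad_exp_const_mul _ hF,
    neg_mul, g.exp_neg_two_mul_F, MetricPotentials.f]
  module

-- Energy-momentum conservation, matching `MetricPotentials.wirtinger_constraint` term by term.
theorem sourceK_smul_grad_Pt (h : g.IsC2At p) (hE : g.corot p (s.ω p) ≠ 0)
    (hEuler : s.EulerAt g p) :
    s.sourceK κ g p • grad g.Pt p =
      (1 / 2 : ℝ) • grad (s.sourcePt κ g) p - s.sourcePt κ g p • grad g.K p +
        (2 * g.Pt p * s.sourceF κ g p) • grad g.F p -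
        (exp (4 * g.F p) / (2 * g.Pt p) * s.sourceA κ g p) • grad g.A p := by
  have hf := (g.f_pos (p := p)).ne'
  have dF := h.F.differentiableAt two_ne_zero
  have dA := h.A.differentiableAt two_ne_zero
  have dPt := h.Pt.differentiableAt two_ne_zero
  have dK := h.K.differentiableAt two_ne_zero
  rw [half_smul_grad_sourcePt dF dK dPt hEuler.1, hEuler.2, grad_corot _ dF dA dPt, sourceF,
    sourceA, sourceK, sourcePt, g.exp_neg_two_mul_F, g.exp_four_mul_F, ← MetricPotentials.f]
  match_scalars <;> field_simp <;> ring

theorem fieldK_eq_sourceK (hF : ContDiffAt ℝ 2 g.F p) (hA : ContDiffAt ℝ 2 g.A p)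
    (hPt : ContDiffAt ℝ 3 g.Pt p) (hK : ContDiffAt ℝ 2 g.K p) (hPt₀ : g.Pt p ≠ 0)
    (hE : g.corot p (s.ω p) ≠ 0) (hgrad : grad g.Pt p ≠ 0) (hEuler : s.EulerAt g p)
    (hred : ∀ᶠ q in 𝓝 p, s.ReducedAt κ g q) : g.fieldK p = s.sourceK κ g p := by
  have bianchi := MetricPotentials.wirtinger_constraint hF hA hPt hK hPt₀
  have conservation :=
    sourceK_smul_grad_Pt (κ := κ) ⟨hF, hA, hPt.of_le (by norm_num), hK⟩ hE hEuler
  obtain ⟨field_F, field_A, lap_Pt, -⟩ := hred.self_of_nhds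
  have constraint_eq_zero : wirtinger g.constraint p = 0 := by
    rw [wirtinger_congr (hred.mono fun q hq => hq.2.2.2 : g.constraint =ᶠ[𝓝 p] fun _ => 0)]
    simp [wirtinger]
  have grad_lap : grad (lap g.Pt) p = grad (s.sourcePt κ g) p :=
    grad_congr (hred.mono fun q hq => hq.2.2.1)
  rw [constraint_eq_zero, grad_lap, field_F, field_A, lap_Pt] at bianchi
  apply smul_left_injective ℝ hgrad
  linear_combination (exp := 1) -bianchi - conservation

theorem eulerAt_of_bernoulli {c C : ℝ} {u : ℝ × ℝ → ℝ} {pf : ℝ → ℝ}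
    (hu : DifferentiableAt ℝ u p) (hP : s.P =ᶠ[𝓝 p] fun q => pf (u q))
    (hpf : HasDerivAt pf ((s.ε p + s.P p) / c ^ 2) (u p))
    (hcorot : (g.corot · (s.ω p)) =ᶠ[𝓝 p] fun q => exp (2 * (C - u q / c ^ 2))) :
    s.EulerAt g p := by
  have hasDerivAt_exp : HasDerivAt (fun t => exp (2 * (C - t / c ^ 2)))
      (-(2 / c ^ 2) * exp (2 * (C - u p / c ^ 2))) (u p) := by
    refine ((((hasDerivAt_id' (u p)).div_const (c ^ 2)).const_sub C).const_mul 2).exp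
      |>.congr_deriv ?_
    ring
  refine ⟨(hpf.differentiableAt.comp p hu).congr_of_eventuallyEq hP, ?_⟩
  have corot_eq : g.corot p (s.ω p) = exp (2 * (C - u p / c ^ 2)) := hcorot.self_of_nhds
  rw [grad_congr hP, grad_comp hpf hu, grad_congr hcorot, grad_comp hasDerivAt_exp hu, corot_eq,
    smul_smul]
  congr 1
  field_simp

theorem eulerAt_of_vacuum {u : ℝ × ℝ → ℝ} {pf : ℝ → ℝ} (hu : DifferentiableAt ℝ u p)
    (hP : s.P =ᶠ[𝓝 p] fun q => pf (u q)) (hpf : HasDerivAt pf 0 (u p))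
    (hvac : s.ε p + s.P p = 0) : s.EulerAt g p := by
  refine ⟨(hpf.differentiableAt.comp p hu).congr_of_eventuallyEq hP, ?_⟩
  rw [grad_congr hP, grad_comp hpf hu, hvac]
  simp

theorem eulerAt_of_equationOfState {c : ℝ} (hc : c ≠ 0) {O : Set (ℝ × ℝ)} (hO : IsOpen O)
    {u : ℝ × ℝ → ℝ} (hu : DifferentiableOn ℝ u O) {rf pf : ℝ → ℝ}
    (hrfc : Continuous rf) (hpfc : Continuous pf)
    (hrf0 : ∀ t ≤ 0, rf t = 0) (hpf0 : ∀ t ≤ 0, pf t = 0)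
    (hpf' : ∀ t > 0, HasDerivAt pf (rf t + pf t / c ^ 2) t)
    (hε : ∀ p ∈ O, s.ε p = c ^ 2 * rf (u p)) (hP : ∀ p ∈ O, s.P p = pf (u p))
    (hrigid : ∀ p ∈ O, 0 < u p → ∀ᶠ q in 𝓝 p, s.ω q = s.ω p)
    (hE : ∀ p ∈ O, 0 < g.corot p (s.ω p))
    (hBern : ∀ p ∈ {x ∈ O | 0 < u x}, ∀ q ∈ connectedComponentIn {x ∈ O | 0 < u x} p,
      u q / c ^ 2 + log (g.corot q (s.ω q)) / 2 = u p / c ^ 2 + log (g.corot p (s.ω p)) / 2)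
    (hp : p ∈ O) : s.EulerAt g p := by
  have enthalpy_eq_zero : ∀ t ≤ 0, rf t + pf t / c ^ 2 = 0 := fun t ht => by
    simp [hrf0 t ht, hpf0 t ht]
  have deriv_eq : rf (u p) + pf (u p) / c ^ 2 = (s.ε p + s.P p) / c ^ 2 := by
    rw [hε p hp, hP p hp]
    field_simp
  have hpf_u : HasDerivAt pf ((s.ε p + s.P p) / c ^ 2) (u p) :=
    deriv_eq ▸ hasDerivAt_of_eq_zero_of_nonpos (φ' := fun t => rf t + pf t / c ^ 2)
      hpfc.continuousAt (by fun_prop) hpf0 enthalpy_eq_zero hpf' (u p)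
  have hu_p := hu.differentiableAt (hO.mem_nhds hp)
  have P_eventuallyEq : s.P =ᶠ[𝓝 p] fun q => pf (u q) := eventually_of_mem (hO.mem_nhds hp) hP
  obtain hup | hup := le_or_gt (u p) 0
  · rw [enthalpy_eq_zero _ hup, eq_comm, div_eq_zero_iff, or_iff_left (pow_ne_zero 2 hc)]
      at deriv_eq
    rw [deriv_eq, zero_div] at hpf_u
    exact eulerAt_of_vacuum hu_p P_eventuallyEq hpf_u deriv_eq
  · have fluid_mem_nhds : {x ∈ O | 0 < u x} ∈ 𝓝 p :=
      (hu.continuousOn.isOpen_inter_preimage hO isOpen_Ioi).mem_nhds ⟨hp, hup⟩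
    refine eulerAt_of_bernoulli (C := u p / c ^ 2 + log (g.corot p (s.ω p)) / 2)
      hu_p P_eventuallyEq hpf_u ?_
    filter_upwards [connectedComponentIn_mem_nhds fluid_mem_nhds, hO.mem_nhds hp,
      hrigid p hp hup] with q hq hqO hω
    rw [← hBern p ⟨hp, hup⟩ q hq, ← hω, add_sub_cancel_left, mul_div_cancel₀ _ two_ne_zero,
      exp_log (hE q hqO)]

theorem einsteinAt_iff_of_ricci {r00 r02 r22 r11 r33 r13 : ℝ} (hPt₀ : g.Pt p ≠ 0)
    (h00 : 2 * exp (g.m p) / g.Pt p * r00 =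
      weightedLap g.Pt g.f p + g.f p * g.sigma p / g.Pt p ^ 3)
    (h02 : -(2 * exp (g.m p) / g.Pt p * r02) =
      weightedLap g.Pt g.k p + g.k p * g.sigma p / g.Pt p ^ 3)
    (h22 : -(2 * exp (g.m p) / g.Pt p * r22) =
      weightedLap g.Pt g.l p + g.l p * g.sigma p / g.Pt p ^ 3)
    (h11 : 2 * r11 = -(d1 (d1 g.m) p) - d3 (d3 g.m) p - 2 * d1 (d1 g.Pt) p / g.Pt p
      + (1 / g.Pt p) * (d1 g.m p * d1 g.Pt p - d3 g.m p * d3 g.Pt p)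
      + (1 / g.Pt p ^ 2) * (d1 g.f p * d1 g.l p + d1 g.k p ^ 2))
    (h33 : 2 * r33 = -(d1 (d1 g.m) p) - d3 (d3 g.m) p - 2 * d3 (d3 g.Pt) p / g.Pt p
      - (1 / g.Pt p) * (d1 g.m p * d1 g.Pt p - d3 g.m p * d3 g.Pt p)
      + (1 / g.Pt p ^ 2) * (d3 g.f p * d3 g.l p + d3 g.k p ^ 2))
    (h13 : 2 * r13 = -(2 * d1 (d3 g.Pt) p / g.Pt p)
      + (1 / g.Pt p) * (d3 g.m p * d1 g.Pt p + d1 g.m p * d3 g.Pt p)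
      + (1 / (2 * g.Pt p ^ 2)) *
        (d1 g.f p * d3 g.l p + d1 g.l p * d3 g.f p + 2 * d1 g.k p * d3 g.k p)) :
    s.EinsteinAt κ g p ↔ r00 = κ * s.stress00 g p ∧ r02 = κ * s.stress02 g p ∧
      r22 = κ * s.stress22 g p ∧ r11 = κ * s.stress11 g p ∧ r33 = κ * s.stress11 g p ∧
      r13 = 0 := by
  have eq_div {d r t : ℝ} (hd : d ≠ 0) (h : d * r = t) : r = t / d :=
    EuclideanDomain.eq_div_of_mul_eq_right hd h
  have hcoeff : 2 * exp (g.m p) / g.Pt p ≠ 0 := by simp [hPt₀]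
  rw [eq_div hcoeff h00, eq_div hcoeff (neg_eq_iff_eq_neg.1 h02),
    eq_div hcoeff (neg_eq_iff_eq_neg.1 h22), eq_div two_ne_zero h11, eq_div two_ne_zero h33,
    eq_div two_ne_zero h13]
  rfl

theorem reducedAt_iff (hPt : ContDiffAt ℝ 2 g.Pt p) : s.ReducedAt κ g p ↔
    d1 (d1 g.F) p + d3 (d3 g.F) p + (1 / g.Pt p) * (d1 g.Pt p * d1 g.F p + d3 g.Pt p * d3 g.F p)
        + (exp (4 * g.F p) / (2 * g.Pt p ^ 2)) * (d1 g.A p ^ 2 + d3 g.A p ^ 2) =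
      s.sourceF κ g p ∧
    d1 (d1 g.A) p + d3 (d3 g.A) p - (1 / g.Pt p) * (d1 g.Pt p * d1 g.A p + d3 g.Pt p * d3 g.A p)
        + 4 * (d1 g.F p * d1 g.A p + d3 g.F p * d3 g.A p) =
      s.sourceA κ g p ∧
    d1 (d1 g.Pt) p + d3 (d3 g.Pt) p = s.sourcePt κ g p ∧
    d1 g.Pt p * d1 g.K p - d3 g.Pt p * d3 g.K p =
      (1 / 2) * (d1 (d1 g.Pt) p - d3 (d3 g.Pt) p) + g.Pt p * (d1 g.F p ^ 2 - d3 g.F p ^ 2) -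
        (exp (4 * g.F p) / (4 * g.Pt p)) * (d1 g.A p ^ 2 - d3 g.A p ^ 2) ∧
    d3 g.Pt p * d1 g.K p + d1 g.Pt p * d3 g.K p =
      d1 (d3 g.Pt) p + 2 * g.Pt p * d1 g.F p * d3 g.F p -
        (exp (4 * g.F p) / (2 * g.Pt p)) * (d1 g.A p * d3 g.A p) := by
  simp only [ReducedAt, MetricPotentials.fieldF, MetricPotentials.fieldA, lap, inner_grad_grad,
    Complex.ext_iff, MetricPotentials.constraint_re hPt, MetricPotentials.constraint_im hPt,
    Complex.zero_re, Complex.zero_im, sub_eq_zero, pow_two]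

end RotatingFluid

open RotatingFluid

/-- The equivalence with the Euler equation in place of an equation of state. -/
theorem stmt_4_general (κ : ℝ) {g : MetricPotentials} {s : RotatingFluid} {O : Set (ℝ × ℝ)}
    (hO : IsOpen O) (hF : ContDiffOn ℝ 2 g.F O) (hA : ContDiffOn ℝ 2 g.A O)
    (hPt : ContDiffOn ℝ 3 g.Pt O) (hK : ContDiffOn ℝ 2 g.K O) (hPt₀ : ∀ p ∈ O, g.Pt p ≠ 0)
    (hE : ∀ p ∈ O, g.corot p (s.ω p) ≠ 0) (hgrad : ∀ p ∈ O, grad g.Pt p ≠ 0)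
    (hEuler : ∀ p ∈ O, s.EulerAt g p) :
    (∀ p ∈ O, s.EinsteinAt κ g p) ↔ ∀ p ∈ O, s.ReducedAt κ g p := by
  have nhds_O {p} (hp : p ∈ O) : O ∈ 𝓝 p := hO.mem_nhds hp
  have einstein_iff {p} (hp : p ∈ O) :
      s.EinsteinAt κ g p ↔ s.ReducedAt κ g p ∧ g.fieldK p = s.sourceK κ g p :=
    einsteinAt_iff ⟨hF.contDiffAt (nhds_O hp), hA.contDiffAt (nhds_O hp),
      (hPt.contDiffAt (nhds_O hp)).of_le (by norm_num), hK.contDiffAt (nhds_O hp)⟩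
      (hPt₀ p hp) (hE p hp)
  refine ⟨fun h p hp => ((einstein_iff hp).1 (h p hp)).1, fun h p hp =>
    (einstein_iff hp).2 ⟨h p hp, ?_⟩⟩
  exact fieldK_eq_sourceK (hF.contDiffAt (nhds_O hp)) (hA.contDiffAt (nhds_O hp))
    (hPt.contDiffAt (nhds_O hp)) (hK.contDiffAt (nhds_O hp)) (hPt₀ p hp) (hE p hp) (hgrad p hp)
    (hEuler p hp) (eventually_of_mem (nhds_O hp) h)

/-- **Theorem 1 of the paper (equivalence).** Under the Setup, the equation-of-state/Euler
hypotheses, `Pt` of class `C³`, condition (C), and `O = O₁ ∪ O₂` with `Ω` constant on the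
open set `O₁` and `u ≤ 0` on the open set `O₂`: the full Einstein system
(36a)–(36f) holds on `O` iff the reduced system (N.9a)(N.9b)(N.9c)(Ya)(Yb) holds on `O`. -/
theorem stmt_4
    (c κ : ℝ) (hc : 0 < c) (hκ : 0 < κ)
    (O : Set (ℝ × ℝ)) (hO : IsOpen O) (hOw : ∀ p ∈ O, 0 < p.1)
    (F A Pt K ρ P Ω : ℝ × ℝ → ℝ)
    (hF : ContDiffOn ℝ 2 F O) (hA : ContDiffOn ℝ 2 A O)
    (hPt : ContDiffOn ℝ 3 Pt O) (hK : ContDiffOn ℝ 2 K O)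
    (hPtpos : ∀ p ∈ O, 0 < Pt p)
    (hρc : ContinuousOn ρ O) (hPc : ContinuousOn P O) (hΩc : ContinuousOn Ω O)
    (hρ0 : ∀ p ∈ O, 0 ≤ ρ p) (hP0 : ∀ p ∈ O, 0 ≤ P p)
    (ε f k m l E Sg : ℝ × ℝ → ℝ)
    (hε : ε = fun p => c ^ 2 * ρ p)
    (hf : f = fun p => exp (2 * F p))
    (hk : k = fun p => -exp (2 * F p) * A p)
    (hm : m = fun p => 2 * (-F p + K p))
    (hl : l = fun p => -exp (2 * F p) * (A p) ^ 2 + exp (-(2 * F p)) * (Pt p) ^ 2)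
    (hE : E = fun p => exp (2 * F p) * (1 + Ω p * A p / c) ^ 2
      - exp (-(2 * F p)) * (Ω p ^ 2 / c ^ 2) * (Pt p) ^ 2)
    (hEpos : ∀ p ∈ O, 0 < E p)
    (hSg : Sg = fun p => d1 f p * d1 l p + d3 f p * d3 l p + (d1 k p) ^ 2 + (d3 k p) ^ 2)
    (hC : ∀ p ∈ O, (d1 Pt p) ^ 2 + (d3 Pt p) ^ 2 ≠ 0)
    (O₁ O₂ : Set (ℝ × ℝ)) (hO₁ : IsOpen O₁) (hO₂ : IsOpen O₂) (hO12 : O = O₁ ∪ O₂)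
    (hΩconst : ∃ Ωc : ℝ, ∀ p ∈ O₁, Ω p = Ωc)
    (u : ℝ × ℝ → ℝ) (hu : ContDiffOn ℝ 2 u O)
    (hvac : ∀ p ∈ O₂, u p ≤ 0)
    (rf pf : ℝ → ℝ) (hrfc : Continuous rf) (hpfc : Continuous pf)
    (hrf0 : ∀ s ≤ (0:ℝ), rf s = 0) (hpf0 : ∀ s ≤ (0:ℝ), pf s = 0)
    (hpf' : ∀ s > (0:ℝ), HasDerivAt pf (rf s + pf s / c ^ 2) s)
    (hρu : ∀ p ∈ O, ρ p = rf (u p)) (hPu : ∀ p ∈ O, P p = pf (u p))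
    (G : ℝ × ℝ → ℝ) (hG : G = fun p => Real.log (E p) / 2)
    (hBern : ∀ p ∈ {x ∈ O | 0 < u x}, ∀ q ∈ connectedComponentIn {x ∈ O | 0 < u x} p,
      u q / c ^ 2 + G q = u p / c ^ 2 + G p)
    (R00 R02 R22 : ℝ × ℝ → ℝ)
    (hR00 : ∀ p ∈ O, (2 * exp (m p) / Pt p) * R00 p =
      d1 (fun q => d1 f q / Pt q) p + d3 (fun q => d3 f q / Pt q) p + f p * Sg p / (Pt p) ^ 3)
    (hR02 : ∀ p ∈ O, -((2 * exp (m p) / Pt p) * R02 p) =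
      d1 (fun q => d1 k q / Pt q) p + d3 (fun q => d3 k q / Pt q) p + k p * Sg p / (Pt p) ^ 3)
    (hR22 : ∀ p ∈ O, -((2 * exp (m p) / Pt p) * R22 p) =
      d1 (fun q => d1 l q / Pt q) p + d3 (fun q => d3 l q / Pt q) p + l p * Sg p / (Pt p) ^ 3)
    (S00 S02 S22 : ℝ × ℝ → ℝ)
    (hS00 : S00 = fun p => (1/2) * (ε p + P p) * (E p)⁻¹
      * ((f p - (Ω p / c) * k p) ^ 2 + (Ω p ^ 2 / c ^ 2) * (Pt p) ^ 2) + P p * f p)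
    (hS02 : S02 = fun p => (1/2) * (ε p + P p) * (E p)⁻¹
      * (-(k p * f p) - 2 * (Ω p / c) * f p * l p + (Ω p ^ 2 / c ^ 2) * k p * l p) - P p * k p)
    (hS22 : S22 = fun p => (1/2) * (ε p + P p) * (E p)⁻¹
      * ((Pt p) ^ 2 + (k p + (Ω p / c) * l p) ^ 2) - P p * l p)
    (R11 R33 R13 : ℝ × ℝ → ℝ)
    (hR11 : ∀ p ∈ O, 2 * R11 p =
      -(d1 (d1 m) p) - d3 (d3 m) p - 2 * d1 (d1 Pt) p / Pt p
        + (1 / Pt p) * (d1 m p * d1 Pt p - d3 m p * d3 Pt p)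
        + (1 / (Pt p) ^ 2) * (d1 f p * d1 l p + (d1 k p) ^ 2))
    (hR33 : ∀ p ∈ O, 2 * R33 p =
      -(d1 (d1 m) p) - d3 (d3 m) p - 2 * d3 (d3 Pt) p / Pt p
        - (1 / Pt p) * (d1 m p * d1 Pt p - d3 m p * d3 Pt p)
        + (1 / (Pt p) ^ 2) * (d3 f p * d3 l p + (d3 k p) ^ 2))
    (hR13 : ∀ p ∈ O, 2 * R13 p =
      -(2 * d1 (d3 Pt) p / Pt p)
        + (1 / Pt p) * (d3 m p * d1 Pt p + d1 m p * d3 Pt p)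
        + (1 / (2 * (Pt p) ^ 2)) * (d1 f p * d3 l p + d1 l p * d3 f p + 2 * d1 k p * d3 k p))
    (S11 : ℝ × ℝ → ℝ)
    (hS11 : S11 = fun p => (exp (m p) / 2) * (ε p - P p)) :
    ((∀ p ∈ O, R00 p = κ * S00 p) ∧
     (∀ p ∈ O, R02 p = κ * S02 p) ∧
     (∀ p ∈ O, R22 p = κ * S22 p) ∧
     (∀ p ∈ O, R11 p = κ * S11 p) ∧
     (∀ p ∈ O, R33 p = κ * S11 p) ∧
     (∀ p ∈ O, R13 p = 0)) ↔
    ((∀ p ∈ O,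
      d1 (d1 F) p + d3 (d3 F) p
        + (1 / Pt p) * (d1 Pt p * d1 F p + d3 Pt p * d3 F p)
        + (exp (4 * F p) / (2 * (Pt p) ^ 2)) * ((d1 A p) ^ 2 + (d3 A p) ^ 2)
      = (κ / 2) * exp (2 * (-F p + K p)) *
          ((ε p + P p) * (exp (2 * F p) * (1 + Ω p * A p / c) ^ 2
            + exp (-(2 * F p)) * (Ω p ^ 2 / c ^ 2) * (Pt p) ^ 2) / E p + 2 * P p)) ∧
     (∀ p ∈ O,
      d1 (d1 A) p + d3 (d3 A) p
        - (1 / Pt p) * (d1 Pt p * d1 A p + d3 Pt p * d3 A p)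
        + 4 * (d1 F p * d1 A p + d3 F p * d3 A p)
      = -(2 * κ) * exp (2 * (-F p + K p)) * (ε p + P p) *
          (exp (-(2 * F p)) * (Ω p / c) * (Pt p) ^ 2 * (1 + Ω p * A p / c)) / E p) ∧
     (∀ p ∈ O,
      d1 (d1 Pt) p + d3 (d3 Pt) p
      = 2 * κ * exp (2 * (-F p + K p)) * P p * Pt p) ∧
     (∀ p ∈ O,
      d1 Pt p * d1 K p - d3 Pt p * d3 K p
      = (1/2) * (d1 (d1 Pt) p - d3 (d3 Pt) p)
        + Pt p * ((d1 F p) ^ 2 - (d3 F p) ^ 2)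
        - (exp (4 * F p) / (4 * Pt p)) * ((d1 A p) ^ 2 - (d3 A p) ^ 2)) ∧
     (∀ p ∈ O,
      d3 Pt p * d1 K p + d1 Pt p * d3 K p
      = d1 (d3 Pt) p + 2 * Pt p * d1 F p * d3 F p
        - (exp (4 * F p) / (2 * Pt p)) * (d1 A p * d3 A p))) := by
  let g : MetricPotentials := ⟨F, A, Pt, K⟩
  let s : RotatingFluid := ⟨ε, P, fun p => Ω p / c⟩
  have corot_eq (p) : E p = g.corot p (s.ω p) := by
    simp only [hE, MetricPotentials.corot, g, s, div_pow, div_mul_eq_mul_div]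
  have euler : ∀ p ∈ O, s.EulerAt g p := fun p hp => by
    refine eulerAt_of_equationOfState hc.ne' hO (hu.differentiableOn two_ne_zero) hrfc hpfc hrf0
      hpf0 hpf' (fun q hq => ?_) hPu (fun q hq huq => ?_) (fun q hq => corot_eq q ▸ hEpos q hq)
      (by simpa only [hG, corot_eq] using hBern) hp
    · simp only [s, hε, hρu q hq]
    · have hq₁ : q ∈ O₁ := (hO12 ▸ hq).resolve_right fun hq₂ => (hvac q hq₂).not_gt huq
      obtain ⟨Ωc, hΩ⟩ := hΩconst
      filter_upwards [hO₁.mem_nhds hq₁] with q' hq'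
      simp only [s, hΩ q hq₁, hΩ q' hq']
  have grad_ne_zero (p) (hp : p ∈ O) : grad g.Pt p ≠ 0 := fun h =>
    hC p hp (by rw [pow_two, pow_two, ← inner_grad_grad]; exact inner_self_eq_zero.2 h)
  simp only [← forall₂_and]
  refine (forall₂_congr fun p hp => ?_).trans <| (stmt_4_general κ (g := g) hO hF hA hPt hK
    (fun p hp => (hPtpos p hp).ne') (fun p hp => (corot_eq p ▸ hEpos p hp).ne') grad_ne_zero
    euler).trans <| forall₂_congr fun p hp => ?_
  · subst hf hk hm hl hSg
    rw [einsteinAt_iff_of_ricci (g := g) (hPtpos p hp).ne' (hR00 p hp) (hR02 p hp) (hR22 p hp)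
      (hR11 p hp) (hR33 p hp) (hR13 p hp), hS00, hS02, hS22, hS11]
    simp only [stress00, stress02, stress22, stress11, corot_eq, ← div_pow]
    rfl
  · rw [reducedAt_iff ((hPt.contDiffAt (hO.mem_nhds hp)).of_le (by norm_num))]
    simp only [sourceF, sourceA, sourcePt, corot_eq, div_pow, div_mul_eq_mul_div, g, s]
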